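/- Fix y ∈ ℝ³ \ {0} and p ∈ ℝ with |p| < 3/2. Define K(x) = e^{-|x-y|}/|x-y| - ∫_{S²} e^{-||x|ω-y|}/||x|ω-y| dσ(ω). Then the L² norm over ℝ³ of x ↦ |x|^{-1±p}·K(x) is bounded by C_p · |y|^{±p} · min(|y|^{-1/2}, |y|^{-1}). -/

import Mathlib

open MeasureTheory

/-- The uniform probability measure on the unit sphere `S² ⊂ ℝ³`. -/
noncomputable def sphereProb :
    Measure (Metric.sphere (0 : EuclideanSpace ℝ (Fin 3)) 1) :=
  (((volume : Measure (EuclideanSpace ℝ (Fin 3))).toSphere Set.univ)⁻¹) •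
    (volume : Measure (EuclideanSpace ℝ (Fin 3))).toSphere

/-- The projection of the Yukawa kernel with pole `y` onto non-radial functions. -/
noncomputable def angularYukawa (x y : EuclideanSpace ℝ (Fin 3)) : ℝ :=
  Real.exp (-‖x - y‖) / ‖x - y‖ -
    ∫ ω, Real.exp (-‖‖x‖ • (ω : EuclideanSpace ℝ (Fin 3)) - y‖) /
      ‖‖x‖ • (ω : EuclideanSpace ℝ (Fin 3)) - y‖ ∂sphereProb

/-!
Where `‖x‖` is comparable to `‖y‖`, the weight is comparable to a constant, and removing the mean
over each centred sphere contracts `L²` of any union of such spheres (a variance is at most a second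
moment), so it suffices that the Yukawa kernel itself is square integrable near its pole in
dimension three. Elsewhere the distance from `y` oscillates by at most `2 * min ‖x‖ ‖y‖` on the
sphere through `x`, while it stays at least `max ‖x‖ ‖y‖ / 2`; the mean value theorem then bounds
the squared integrand, after rescaling by `‖y‖`, by `min (‖x‖ ^ (2 * q)) (‖x‖ ^ (2 * q - 6))` with
`q = ± p`, and this is integrable on a three-dimensional space exactly when `|q| < 3 / 2`.
-/

open Set Metric Module
open scoped ENNReal NNReal

section Average

variable {α : Type*} [MeasurableSpace α] {ν : Measure α} [IsFiniteMeasure ν] [NeZero ν]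
  {f : α → ℝ}

-- The left-hand side is, up to normalization, the variance of `f`.
theorem lintegral_enorm_sub_average_sq_le (hf : AEStronglyMeasurable f ν) :
    ∫⁻ a, ‖f a - ⨍ b, f b ∂ν‖ₑ ^ 2 ∂ν ≤ ∫⁻ a, ‖f a‖ₑ ^ 2 ∂ν := by
  have hvar : ProbabilityTheory.evariance f ((ν univ)⁻¹ • ν) ≤
      ∫⁻ a, ‖f a‖ₑ ^ 2 ∂((ν univ)⁻¹ • ν) := by
    rw [ProbabilityTheory.evariance_def' (hf.mono_ac Measure.smul_absolutelyContinuous)]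
    exact tsub_le_self
  rw [ProbabilityTheory.evariance, lintegral_smul_measure, lintegral_smul_measure] at hvar
  exact (ENNReal.mul_le_mul_iff_right (ENNReal.inv_ne_zero.2 (measure_ne_top ν univ))
    (ENNReal.inv_ne_top.2 (NeZero.ne _))).1 hvar

theorem abs_sub_average_le {c B : ℝ} (hf : AEStronglyMeasurable f ν) (h : ∀ a, |c - f a| ≤ B) :
    |c - ⨍ a, f a ∂ν| ≤ B := by
  have hmem : ∀ᵐ a ∂ν, f a ∈ Icc (c - B) (c + B) :=
    .of_forall fun a => by rw [mem_Icc]; constructor <;> linarith [abs_le.1 (h a)]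
  have := (convex_Icc (c - B) (c + B)).average_mem isClosed_Icc hmem
    (.of_mem_Icc _ _ hf.aemeasurable hmem)
  rw [abs_le]
  constructor <;> linarith [this.1, this.2]

end Average

theorem norm_smul_sphere {E : Type*} [NormedAddCommGroup E] [NormedSpace ℝ E] {r : ℝ} (hr : 0 ≤ r)
    (ω : sphere (0 : E) 1) : ‖r • (ω : E)‖ = r := by
  rw [norm_smul_of_nonneg hr, norm_eq_of_mem_sphere, mul_one]

theorem abs_norm_sub_sub_norm_sub_le {E : Type*} [SeminormedAddCommGroup E] {x z : E} (y : E)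
    (hz : ‖z‖ = ‖x‖) : |‖x - y‖ - ‖z - y‖| ≤ 2 * min ‖x‖ ‖y‖ := by
  rw [mul_min_of_nonneg _ _ zero_le_two]
  refine le_min ?_ ?_
  · have := abs_norm_sub_norm_le (x - y) (z - y)
    rw [sub_sub_sub_cancel_right] at this
    linarith [norm_sub_le x z]
  · rw [abs_le]
    constructor <;>
      linarith [norm_sub_norm_le x y, norm_sub_le x y, norm_sub_norm_le z y, norm_sub_le z y]

section PolarCoordinates

variable {E : Type*} [NormedAddCommGroup E] [NormedSpace ℝ E] [FiniteDimensional ℝ E]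
  [MeasurableSpace E] [BorelSpace E] (μ : Measure E) [μ.IsAddHaarMeasure]

theorem lintegral_comp_inv_smul (f : E → ℝ≥0∞) {r : ℝ} (hr : 0 < r) :
    ∫⁻ x, f (r⁻¹ • x) ∂μ = ENNReal.ofReal (r ^ finrank ℝ E) * ∫⁻ x, f x ∂μ := by
  have hmap := Measure.map_addHaar_smul μ (inv_ne_zero hr.ne')
  rw [inv_pow, inv_inv, abs_of_pos (by positivity)] at hmap
  rw [← smul_eq_mul, ← lintegral_smul_measure, ← hmap,
    (measurableEmbedding_const_smul₀ (inv_ne_zero hr.ne')).lintegral_map]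

variable [Nontrivial E]

instance neZero_toSphere : NeZero μ.toSphere :=
  ⟨μ.toSphere_ne_zero⟩

theorem lintegral_eq_lintegral_Ioi_lintegral_toSphere {F : E → ℝ≥0∞} (hF : Measurable F) :
    ∫⁻ x, F x ∂μ = ∫⁻ r in Ioi (0 : ℝ), ENNReal.ofReal (r ^ (finrank ℝ E - 1)) *
      ∫⁻ ω, F (r • (ω : E)) ∂μ.toSphere := by
  let polar := homeomorphUnitSphereProd E
  have hmeas : Measurable fun z => F (polar.symm z) :=
    hF.comp (measurable_subtype_coe.comp polar.symm.measurable)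
  calc ∫⁻ x, F x ∂μ
      = ∫⁻ x : ({0}ᶜ : Set E), F (polar.symm (polar x)) ∂μ.comap Subtype.val := by
        simp only [polar.symm_apply_apply]
        rw [lintegral_subtype_comap (measurableSet_singleton _).compl, restrict_compl_singleton]
    _ = ∫⁻ z, F (polar.symm z) ∂μ.toSphere.prod (.volumeIoiPow (finrank ℝ E - 1)) :=
        μ.measurePreserving_homeomorphUnitSphereProd.lintegral_comp hmeas
    _ = ∫⁻ r : Ioi (0 : ℝ), ENNReal.ofReal (r.1 ^ (finrank ℝ E - 1)) *
          ∫⁻ ω, F (r.1 • (ω : E)) ∂μ.toSphere ∂volume.comap Subtype.val := by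
        rw [lintegral_prod_symm' _ hmeas, Measure.volumeIoiPow,
          lintegral_withDensity_eq_lintegral_mul _ (by fun_prop) hmeas.lintegral_prod_left']
        rfl
    _ = _ := lintegral_subtype_comap measurableSet_Ioi fun r =>
        ENNReal.ofReal (r ^ (finrank ℝ E - 1)) * ∫⁻ ω, F (r • (ω : E)) ∂μ.toSphere

theorem setLIntegral_preimage_norm_eq {F : E → ℝ≥0∞} (hF : Measurable F) {T : Set ℝ}
    (hT : MeasurableSet T) :
    ∫⁻ x in norm ⁻¹' T, F x ∂μ = ∫⁻ r in Ioi 0 ∩ T, ENNReal.ofReal (r ^ (finrank ℝ E - 1)) *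
      ∫⁻ ω, F (r • (ω : E)) ∂μ.toSphere := by
  have hT' : MeasurableSet (norm ⁻¹' T : Set E) := measurable_norm hT
  rw [← lintegral_indicator hT', lintegral_eq_lintegral_Ioi_lintegral_toSphere μ (hF.indicator hT'),
    inter_comm, ← setLIntegral_indicator hT]
  refine setLIntegral_congr_fun measurableSet_Ioi fun r hr => ?_
  have hmem (ω : sphere (0 : E) 1) : r • (ω : E) ∈ norm ⁻¹' T ↔ r ∈ T := by
    rw [mem_preimage, norm_smul_sphere (le_of_lt hr)]
  by_cases hrT : r ∈ T <;> simp [indicator, hmem, hrT]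

theorem setLIntegral_closedBall_fun_norm {φ : ℝ → ℝ≥0∞} (hφ : Measurable φ) (R : ℝ) :
    ∫⁻ x in closedBall 0 R, φ ‖x‖ ∂μ = μ.toSphere univ *
      ∫⁻ r in Ioc 0 R, ENNReal.ofReal (r ^ (finrank ℝ E - 1)) * φ r := by
  have hball : closedBall (0 : E) R = norm ⁻¹' Iic R := by ext; simp
  rw [hball, setLIntegral_preimage_norm_eq μ (by fun_prop) measurableSet_Iic, Ioi_inter_Iic,
    ← lintegral_const_mul _ (by fun_prop)]
  refine setLIntegral_congr_fun measurableSet_Ioc fun r hr => ?_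
  simp only [norm_smul_sphere hr.1.le, lintegral_const]
  ring

theorem integrable_min_norm_rpow {a b : ℝ} (ha : -(finrank ℝ E : ℝ) < a)
    (hb : b < -(finrank ℝ E : ℝ)) : Integrable (fun x => min (‖x‖ ^ a) (‖x‖ ^ b)) μ := by
  have hdim : ((finrank ℝ E - 1 : ℕ) : ℝ) = finrank ℝ E - 1 := Nat.cast_pred finrank_pos
  have hmul {r : ℝ} (hr : 0 < r) (c : ℝ) :
      r ^ (finrank ℝ E - 1) * r ^ c = r ^ (finrank ℝ E - 1 + c) := by
    rw [← Real.rpow_natCast, hdim, ← Real.rpow_add hr]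
  rw [integrable_fun_norm_addHaar μ (f := fun r => min (r ^ a) (r ^ b)),
    ← Ioc_union_Ioi_eq_Ioi zero_le_one, integrableOn_union]
  constructor
  · have hint : IntegrableOn (fun r : ℝ => r ^ (finrank ℝ E - 1 + a)) (Ioc 0 1) :=
      (intervalIntegral.intervalIntegrable_rpow' (by linarith)).1
    refine hint.mono' (Measurable.aestronglyMeasurable (by fun_prop)) ?_
    filter_upwards [ae_restrict_mem measurableSet_Ioc] with r hr
    have hr0 : 0 < r := hr.1
    rw [smul_eq_mul, Real.norm_of_nonneg (by positivity), ← hmul hr0]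
    gcongr
    exact min_le_left _ _
  · have hint : IntegrableOn (fun r : ℝ => r ^ (finrank ℝ E - 1 + b)) (Ioi 1) :=
      integrableOn_Ioi_rpow_of_lt (by linarith) one_pos
    refine hint.mono' (Measurable.aestronglyMeasurable (by fun_prop)) ?_
    filter_upwards [ae_restrict_mem measurableSet_Ioi] with r hr
    have hr0 : 0 < r := one_pos.trans hr
    rw [smul_eq_mul, Real.norm_of_nonneg (by positivity), ← hmul hr0]
    gcongr
    exact min_le_right _ _

end PolarCoordinates

section NonradialPart

variable {E : Type*} [NormedAddCommGroup E] [NormedSpace ℝ E] [MeasurableSpace E] [BorelSpace E]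

/-- The projection of `F` onto non-radial functions: `F` minus its mean over the sphere through `x`
centred at the origin, that mean being taken with respect to normalized surface measure. -/
noncomputable def nonradialPart (μ : Measure E) (F : E → ℝ) (x : E) : ℝ :=
  F x - ⨍ ω, F (‖x‖ • (ω : E)) ∂μ.toSphere

variable [FiniteDimensional ℝ E] (μ : Measure E) [μ.IsAddHaarMeasure] {F : E → ℝ}

theorem measurable_nonradialPart (hF : Measurable F) : Measurable (nonradialPart μ F) := by
  have hsm : StronglyMeasurable fun z : E × sphere (0 : E) 1 => F (‖z.1‖ • (z.2 : E)) :=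
    Measurable.stronglyMeasurable (by fun_prop)
  exact hF.sub hsm.integral_prod_right'.measurable

variable [Nontrivial E]

theorem abs_nonradialPart_le (hF : Measurable F) {x : E} {B : ℝ}
    (h : ∀ z, ‖z‖ = ‖x‖ → |F x - F z| ≤ B) : |nonradialPart μ F x| ≤ B :=
  abs_sub_average_le (Measurable.aestronglyMeasurable (by fun_prop)) fun ω =>
    h _ (norm_smul_sphere (norm_nonneg x) ω)

theorem setLIntegral_preimage_norm_enorm_nonradialPart_sq_le (hF : Measurable F) {T : Set ℝ}
    (hT : MeasurableSet T) :
    ∫⁻ x in norm ⁻¹' T, ‖nonradialPart μ F x‖ₑ ^ 2 ∂μ ≤ ∫⁻ x in norm ⁻¹' T, ‖F x‖ₑ ^ 2 ∂μ := by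
  rw [setLIntegral_preimage_norm_eq μ ((measurable_nonradialPart μ hF).enorm.pow_const 2) hT,
    setLIntegral_preimage_norm_eq μ (by fun_prop) hT]
  refine setLIntegral_mono' (measurableSet_Ioi.inter hT) fun r hr => ?_
  gcongr ENNReal.ofReal _ * ?_
  simp only [nonradialPart, norm_smul_sphere (le_of_lt hr.1)]
  have hFr : Measurable fun ω : sphere (0 : E) 1 => F (r • (ω : E)) := by fun_prop
  exact lintegral_enorm_sub_average_sq_le (ν := μ.toSphere) hFr.aestronglyMeasurable

end NonradialPart

section Yukawa

/-- The radial profile of the Yukawa kernel. -/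
noncomputable def yukawa (r : ℝ) : ℝ := Real.exp (-r) / r

theorem measurable_yukawa : Measurable yukawa := by
  unfold yukawa
  fun_prop

theorem hasDerivAt_yukawa {r : ℝ} (hr : r ≠ 0) :
    HasDerivAt yukawa (-(Real.exp (-r) * (1 / r + 1 / r ^ 2))) r := by
  refine ((hasDerivAt_neg r).exp.div (hasDerivAt_id' r) hr).congr_deriv ?_
  field_simp
  ring

theorem abs_yukawa_sub_yukawa_le {a b m : ℝ} (hm : 0 < m) (ha : m ≤ a) (hb : m ≤ b) :
    |yukawa a - yukawa b| ≤ Real.exp (-m) * (1 / m + 1 / m ^ 2) * |a - b| := by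
  refine Convex.norm_image_sub_le_of_norm_hasDerivWithin_le (s := Ici m)
    (fun r hr => (hasDerivAt_yukawa (hm.trans_le hr).ne').hasDerivWithinAt) (fun r hr => ?_)
    (convex_Ici m) hb ha
  have hr' : m ≤ r := hr
  have hr0 : 0 < r := hm.trans_le hr'
  rw [norm_neg, Real.norm_of_nonneg (by positivity)]
  gcongr

theorem sq_exp_neg_mul_one_add_le {m : ℝ} (hm : 0 < m) :
    (Real.exp (-m) * (1 + m)) ^ 2 ≤ 2 * min 1 m⁻¹ := by
  set u := Real.exp (-m) * (1 + m) with hu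
  have hu0 : 0 ≤ u := by positivity
  have hu1 : u ≤ 1 := by
    rw [hu, Real.exp_neg, inv_mul_le_one₀ (Real.exp_pos m), add_comm]
    exact Real.add_one_le_exp m
  have hum : u ≤ 2 * m⁻¹ := by
    rw [hu, Real.exp_neg, inv_mul_le_iff₀ (Real.exp_pos m), ← mul_assoc, ← div_eq_mul_inv,
      le_div_iff₀ hm]
    nlinarith [Real.quadratic_le_exp_of_nonneg hm.le]
  rw [mul_min_of_nonneg _ _ zero_le_two, le_min_iff]
  constructor <;> nlinarith

theorem sq_yukawa_sub_yukawa_le {a b m : ℝ} (hm : 0 < m) (ha : m ≤ a) (hb : m ≤ b) :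
    (yukawa a - yukawa b) ^ 2 ≤ 2 * min 1 m⁻¹ / m ^ 4 * |a - b| ^ 2 := by
  calc (yukawa a - yukawa b) ^ 2
      ≤ (Real.exp (-m) * (1 / m + 1 / m ^ 2) * |a - b|) ^ 2 := by
        rw [← sq_abs]
        gcongr
        exact abs_yukawa_sub_yukawa_le hm ha hb
    _ = (Real.exp (-m) * (1 + m)) ^ 2 / m ^ 4 * |a - b| ^ 2 := by
        field_simp
        ring
    _ ≤ 2 * min 1 m⁻¹ / m ^ 4 * |a - b| ^ 2 := by
        gcongr
        exact sq_exp_neg_mul_one_add_le hm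

theorem setLIntegral_Ioc_sq_mul_enorm_yukawa_sq_le (R : ℝ) :
    ∫⁻ r in Ioc 0 R, ENNReal.ofReal (r ^ 2) * ‖yukawa r‖ₑ ^ 2 ≤ ENNReal.ofReal (min R 1) := by
  have hexp : ∀ r ∈ Ioc 0 R,
      ENNReal.ofReal (r ^ 2) * ‖yukawa r‖ₑ ^ 2 = ENNReal.ofReal (Real.exp (-r) ^ 2) := by
    intro r hr
    have hr0 : 0 < r := hr.1
    rw [← enorm_pow, Real.enorm_of_nonneg (by positivity), ← ENNReal.ofReal_mul (by positivity),
      ← mul_pow, yukawa, mul_div_cancel₀ _ hr0.ne']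
  rw [setLIntegral_congr_fun measurableSet_Ioc hexp, ENNReal.ofReal_min, ENNReal.ofReal_one]
  refine le_min ?_ ?_
  · calc ∫⁻ r in Ioc 0 R, ENNReal.ofReal (Real.exp (-r) ^ 2)
        ≤ ∫⁻ _ in Ioc 0 R, 1 := by
          refine setLIntegral_mono measurable_const fun r hr => ENNReal.ofReal_le_one.2 ?_
          exact pow_le_one₀ (Real.exp_pos _).le (Real.exp_le_one_iff.2 (neg_nonpos.2 hr.1.le))
      _ = ENNReal.ofReal R := by simp
  · calc ∫⁻ r in Ioc 0 R, ENNReal.ofReal (Real.exp (-r) ^ 2)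
        ≤ ∫⁻ r in Ioi 0, ENNReal.ofReal (Real.exp (-r) ^ 2) :=
          lintegral_mono_set Ioc_subset_Ioi_self
      _ ≤ ∫⁻ r in Ioi 0, ENNReal.ofReal (Real.exp (-r)) := by
          refine setLIntegral_mono (by fun_prop) fun r hr => ENNReal.ofReal_le_ofReal ?_
          exact pow_le_of_le_one (Real.exp_pos _).le
            (Real.exp_le_one_iff.2 (neg_nonpos.2 (le_of_lt hr))) two_ne_zero
      _ = 1 := by
          rw [← ofReal_integral_eq_lintegral_ofReal (integrableOn_exp_neg_Ioi 0)
            (.of_forall fun r => (Real.exp_pos _).le), integral_exp_neg_Ioi_zero,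
            ENNReal.ofReal_one]

end Yukawa

theorem sq_rpow_mul_min_sq_div_max_pow_le (a : ℝ) {r s : ℝ} (hr : 0 < r) (hs : 0 < s) :
    (r ^ a) ^ 2 * (min r s ^ 2 / max r s ^ 4) ≤
      s ^ (2 * a - 2) * min ((r / s) ^ (2 * a + 2)) ((r / s) ^ (2 * a - 4)) := by
  have hsq {t : ℝ} (ht : 0 < t) : t ^ (2 * a) = (t ^ a) ^ 2 := by
    rw [mul_comm, Real.rpow_mul ht.le, Real.rpow_two]
  have hrs : 0 < r / s := div_pos hr hs
  rw [mul_min_of_nonneg _ _ (by positivity)]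
  refine le_min ?_ ?_
  · calc (r ^ a) ^ 2 * (min r s ^ 2 / max r s ^ 4)
        ≤ (r ^ a) ^ 2 * (r ^ 2 / s ^ 4) := by
          gcongr
          exacts [min_le_left r s, le_max_right r s]
      _ = s ^ (2 * a - 2) * (r / s) ^ (2 * a + 2) := by
          rw [Real.rpow_sub hs, Real.rpow_add hrs, hsq hs, hsq hrs, Real.div_rpow hr.le hs.le,
            Real.rpow_two, Real.rpow_two]
          field_simp
  · calc (r ^ a) ^ 2 * (min r s ^ 2 / max r s ^ 4)
        ≤ (r ^ a) ^ 2 * (s ^ 2 / r ^ 4) := by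
          gcongr
          exacts [min_le_right r s, le_max_left r s]
      _ = s ^ (2 * a - 2) * (r / s) ^ (2 * a - 4) := by
          rw [Real.rpow_sub hs, Real.rpow_sub hrs, hsq hs, hsq hrs, Real.div_rpow hr.le hs.le,
            Real.rpow_two, Real.rpow_ofNat]
          field_simp

theorem rpow_le_two_rpow_abs_mul_rpow (a : ℝ) {r s : ℝ} (hs : 0 < s)
    (hr : r ∈ Icc (s / 2) (2 * s)) : r ^ a ≤ 2 ^ |a| * s ^ a := by
  have hr0 : 0 < r := (half_pos hs).trans_le hr.1
  suffices (r / s) ^ a ≤ 2 ^ |a| by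
    rwa [Real.div_rpow hr0.le hs.le, div_le_iff₀ (by positivity)] at this
  rcases le_total 0 a with ha | ha
  · rw [abs_of_nonneg ha]
    exact Real.rpow_le_rpow (by positivity) ((div_le_iff₀ hs).2 hr.2) ha
  · rw [abs_of_nonpos ha, Real.rpow_neg zero_le_two, ← Real.inv_rpow zero_le_two]
    refine Real.rpow_le_rpow_of_nonpos (by norm_num) ((le_div_iff₀ hs).2 ?_) ha
    linarith [hr.1]

theorem sq_rpow_mul_min_rpow (q : ℝ) {s : ℝ} (hs : 0 < s) :
    (s ^ q * min (s ^ (-(1 : ℝ) / 2)) (s ^ (-(1 : ℝ)))) ^ 2 = s ^ (2 * q - 1) * min 1 s⁻¹ := by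
  have hhalf : (s ^ (-(1 : ℝ) / 2)) ^ 2 = s⁻¹ := by
    rw [← Real.rpow_mul_natCast hs.le, ← Real.rpow_neg_one]
    norm_num
  have hmin : min (s ^ (-(1 : ℝ) / 2)) (s ^ (-(1 : ℝ))) ^ 2 = s⁻¹ * min 1 s⁻¹ := by
    rw [(pow_left_monotoneOn (n := 2)).map_min (Real.rpow_nonneg hs.le _)
      (Real.rpow_nonneg hs.le _), hhalf,
      Real.rpow_neg_one, mul_min_of_nonneg _ _ (by positivity), mul_one, sq]
  rw [mul_pow, hmin, Real.rpow_sub_one hs.ne', mul_comm 2 q, Real.rpow_mul hs.le, Real.rpow_two]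
  ring

theorem min_three_mul_one_le {s : ℝ} (hs : 0 < s) : min (3 * s) 1 ≤ 3 * (s * min 1 s⁻¹) := by
  rw [mul_min_of_nonneg _ _ hs.le, mul_min_of_nonneg _ _ zero_le_three, mul_one,
    mul_inv_cancel₀ hs.ne']
  gcongr
  norm_num

section SquareIntegral

variable {α : Type*} [MeasurableSpace α] {ν : Measure α} {f : α → ℝ}

theorem integrable_sq_of_lintegral_ne_top (hf : AEStronglyMeasurable f ν)
    (h : ∫⁻ a, ‖f a‖ₑ ^ 2 ∂ν ≠ ∞) : Integrable (fun a => f a ^ 2) ν :=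
  ⟨hf.pow 2, by simpa only [HasFiniteIntegral, enorm_pow] using h.lt_top⟩

theorem sqrt_integral_sq_le {B : ℝ} (hB : 0 ≤ B)
    (h : ∫⁻ a, ‖f a‖ₑ ^ 2 ∂ν ≤ ENNReal.ofReal (B ^ 2)) : √(∫ a, f a ^ 2 ∂ν) ≤ B := by
  rw [Real.sqrt_le_left hB]
  refine (Real.le_norm_self _).trans <| (norm_integral_le_lintegral_norm _).trans <|
    ENNReal.toReal_le_of_le_ofReal (sq_nonneg B) ?_
  simpa only [ofReal_norm, enorm_pow] using h

end SquareIntegral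

section YukawaKernel

variable {E : Type*} [NormedAddCommGroup E]

/-- The Yukawa kernel with pole `y`. -/
noncomputable def yukawaKernel (y x : E) : ℝ := yukawa ‖x - y‖

/-- The part of space where `‖x‖` is comparable to `‖y‖`; away from it, the sphere through `x`
centred at the origin stays far from the pole `y`. -/
def poleShell (y : E) : Set E := norm ⁻¹' Icc (‖y‖ / 2) (2 * ‖y‖)

theorem two_mul_min_norm_le_max_norm {x y : E} (hx : x ∉ poleShell y) :
    2 * min ‖x‖ ‖y‖ ≤ max ‖x‖ ‖y‖ := by
  rw [poleShell, mem_preimage, mem_Icc, not_and_or, not_le, not_le] at hx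
  rcases hx with hx | hx
  · linarith [min_le_left ‖x‖ ‖y‖, le_max_right ‖x‖ ‖y‖]
  · linarith [min_le_right ‖x‖ ‖y‖, le_max_left ‖x‖ ‖y‖]

theorem poleShell_subset_closedBall (y : E) : poleShell y ⊆ closedBall y (3 * ‖y‖) := by
  intro x hx
  rw [mem_closedBall, dist_eq_norm]
  linarith [norm_sub_le x y, hx.2]

variable [MeasurableSpace E] [BorelSpace E]

theorem measurableSet_poleShell (y : E) : MeasurableSet (poleShell y) :=
  measurable_norm measurableSet_Icc

theorem measurable_yukawaKernel (y : E) : Measurable (yukawaKernel y) :=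
  measurable_yukawa.comp (by fun_prop)

variable [NormedSpace ℝ E] [FiniteDimensional ℝ E] [Nontrivial E] (μ : Measure E)
  [μ.IsAddHaarMeasure]

theorem sq_nonradialPart_yukawaKernel_le {x y : E} (hy : y ≠ 0) (hx : x ∉ poleShell y) :
    nonradialPart μ (yukawaKernel y) x ^ 2 ≤
      256 * min 1 ‖y‖⁻¹ * (min ‖x‖ ‖y‖ ^ 2 / max ‖x‖ ‖y‖ ^ 4) := by
  set M := max ‖x‖ ‖y‖
  have hy0 : 0 < ‖y‖ := norm_pos_iff.2 hy
  have hyM : ‖y‖ ≤ M := le_max_right _ _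
  have hM0 : 0 < M := hy0.trans_le hyM
  have hdist {z : E} (hz : ‖z‖ = ‖x‖) : M / 2 ≤ ‖z - y‖ := by
    have := abs_norm_sub_norm_le z y
    rw [hz, ← max_sub_min_eq_abs'] at this
    linarith [two_mul_min_norm_le_max_norm hx]
  have hdecay : min 1 (M / 2)⁻¹ ≤ 2 * min 1 ‖y‖⁻¹ := by
    rw [mul_min_of_nonneg _ _ zero_le_two, inv_div, div_eq_mul_inv]
    gcongr
    norm_num
  have hosc (z : E) (hz : ‖z‖ = ‖x‖) : |yukawaKernel y x - yukawaKernel y z| ≤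
      √(256 * min 1 ‖y‖⁻¹ * (min ‖x‖ ‖y‖ ^ 2 / M ^ 4)) := by
    refine Real.abs_le_sqrt ?_
    calc (yukawaKernel y x - yukawaKernel y z) ^ 2
        ≤ 2 * min 1 (M / 2)⁻¹ / (M / 2) ^ 4 * |‖x - y‖ - ‖z - y‖| ^ 2 :=
          sq_yukawa_sub_yukawa_le (half_pos hM0) (hdist rfl) (hdist hz)
      _ ≤ 2 * (2 * min 1 ‖y‖⁻¹) / (M / 2) ^ 4 * (2 * min ‖x‖ ‖y‖) ^ 2 := by
          gcongr
          exact abs_norm_sub_sub_norm_sub_le y hz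
      _ = 256 * min 1 ‖y‖⁻¹ * (min ‖x‖ ‖y‖ ^ 2 / M ^ 4) := by
          ring
  rw [← sq_abs, ← Real.le_sqrt (abs_nonneg _) (by positivity)]
  exact abs_nonradialPart_le μ (measurable_yukawaKernel y) hosc

theorem enorm_rpow_mul_nonradialPart_sq_le (a : ℝ) {x y : E} (hx : x ≠ 0) (hy : y ≠ 0)
    (hxy : x ∉ poleShell y) :
    ‖‖x‖ ^ a * nonradialPart μ (yukawaKernel y) x‖ₑ ^ 2 ≤
      ENNReal.ofReal (256 * min 1 ‖y‖⁻¹ * ‖y‖ ^ (2 * a - 2)) *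
        ‖min (‖‖y‖⁻¹ • x‖ ^ (2 * a + 2)) (‖‖y‖⁻¹ • x‖ ^ (2 * a - 4))‖ₑ := by
  have hx0 : 0 < ‖x‖ := norm_pos_iff.2 hx
  have hy0 : 0 < ‖y‖ := norm_pos_iff.2 hy
  have hscale : ‖‖y‖⁻¹ • x‖ = ‖x‖ / ‖y‖ := by
    rw [norm_smul_of_nonneg (by positivity), inv_mul_eq_div]
  rw [hscale, ← enorm_pow, Real.enorm_of_nonneg (by positivity),
    Real.enorm_of_nonneg (by positivity), ← ENNReal.ofReal_mul (by positivity)]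
  refine ENNReal.ofReal_le_ofReal ?_
  calc (‖x‖ ^ a * nonradialPart μ (yukawaKernel y) x) ^ 2
      = (‖x‖ ^ a) ^ 2 * nonradialPart μ (yukawaKernel y) x ^ 2 := mul_pow ..
    _ ≤ (‖x‖ ^ a) ^ 2 * (256 * min 1 ‖y‖⁻¹ * (min ‖x‖ ‖y‖ ^ 2 / max ‖x‖ ‖y‖ ^ 4)) := by
        gcongr
        exact sq_nonradialPart_yukawaKernel_le μ hy hxy
    _ = 256 * min 1 ‖y‖⁻¹ * ((‖x‖ ^ a) ^ 2 * (min ‖x‖ ‖y‖ ^ 2 / max ‖x‖ ‖y‖ ^ 4)) := by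
        ring
    _ ≤ 256 * min 1 ‖y‖⁻¹ * (‖y‖ ^ (2 * a - 2) *
          min ((‖x‖ / ‖y‖) ^ (2 * a + 2)) ((‖x‖ / ‖y‖) ^ (2 * a - 4))) := by
        gcongr ?_ * ?_
        exact sq_rpow_mul_min_sq_div_max_pow_le a hx0 hy0
    _ = _ := by ring

theorem exists_setLIntegral_compl_poleShell_le {a : ℝ} (ha : -(finrank ℝ E : ℝ) < 2 * a + 2)
    (ha' : 2 * a - 4 < -(finrank ℝ E : ℝ)) :
    ∃ C : ℝ≥0, ∀ y : E, y ≠ 0 →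
      ∫⁻ x in (poleShell y)ᶜ, ‖‖x‖ ^ a * nonradialPart μ (yukawaKernel y) x‖ₑ ^ 2 ∂μ ≤
        C * ENNReal.ofReal (‖y‖ ^ (2 * a - 2 + finrank ℝ E) * min 1 ‖y‖⁻¹) := by
  let profile (x : E) : ℝ := min (‖x‖ ^ (2 * a + 2)) (‖x‖ ^ (2 * a - 4))
  have hfin : ∫⁻ x, ‖profile x‖ₑ ∂μ ≠ ∞ := (integrable_min_norm_rpow μ ha ha').2.ne
  refine ⟨256 * (∫⁻ x, ‖profile x‖ₑ ∂μ).toNNReal, fun y hy => ?_⟩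
  have hy0 : 0 < ‖y‖ := norm_pos_iff.2 hy
  calc ∫⁻ x in (poleShell y)ᶜ, ‖‖x‖ ^ a * nonradialPart μ (yukawaKernel y) x‖ₑ ^ 2 ∂μ
      ≤ ∫⁻ x in (poleShell y)ᶜ, ENNReal.ofReal (256 * min 1 ‖y‖⁻¹ * ‖y‖ ^ (2 * a - 2)) *
          ‖profile (‖y‖⁻¹ • x)‖ₑ ∂μ := by
        refine setLIntegral_mono_ae' (measurableSet_poleShell y).compl ?_
        filter_upwards [μ.ae_ne 0] with x hx hxy
        exact enorm_rpow_mul_nonradialPart_sq_le μ a hx hy hxy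
    _ ≤ ∫⁻ x, ENNReal.ofReal (256 * min 1 ‖y‖⁻¹ * ‖y‖ ^ (2 * a - 2)) *
          ‖profile (‖y‖⁻¹ • x)‖ₑ ∂μ := setLIntegral_le_lintegral _ _
    _ = ENNReal.ofReal (256 * min 1 ‖y‖⁻¹ * ‖y‖ ^ (2 * a - 2)) *
          (ENNReal.ofReal (‖y‖ ^ finrank ℝ E) * ∫⁻ x, ‖profile x‖ₑ ∂μ) := by
        rw [lintegral_const_mul' _ _ ENNReal.ofReal_ne_top,
          lintegral_comp_inv_smul μ (fun x => ‖profile x‖ₑ) hy0]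
    _ = _ := by
        have h256 : (256 : ℝ≥0∞) = ENNReal.ofReal 256 := by simp
        rw [ENNReal.coe_mul, ENNReal.coe_toNNReal hfin, ENNReal.coe_ofNat, h256,
          Real.rpow_add_natCast hy0.ne', ENNReal.ofReal_mul (by positivity),
          ENNReal.ofReal_mul (by positivity), ENNReal.ofReal_mul (by positivity),
          ENNReal.ofReal_mul (by positivity)]
        ring

theorem setLIntegral_closedBall_enorm_yukawaKernel_sq_le (hE : finrank ℝ E = 3) (y : E) (R : ℝ) :
    ∫⁻ x in closedBall y R, ‖yukawaKernel y x‖ₑ ^ 2 ∂μ ≤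
      μ.toSphere univ * ENNReal.ofReal (min R 1) := by
  have hball : closedBall y R = (· - y) ⁻¹' closedBall 0 R := by
    ext
    simp [dist_eq_norm]
  calc ∫⁻ x in closedBall y R, ‖yukawaKernel y x‖ₑ ^ 2 ∂μ
      = ∫⁻ x in closedBall 0 R, ‖yukawa ‖x‖‖ₑ ^ 2 ∂μ := by
        rw [hball]
        exact (measurePreserving_sub_right μ y).setLIntegral_comp_preimage_emb
          (MeasurableEquiv.subRight y).measurableEmbedding (fun x => ‖yukawa ‖x‖‖ₑ ^ 2) _
    _ = μ.toSphere univ * ∫⁻ r in Ioc 0 R, ENNReal.ofReal (r ^ 2) * ‖yukawa r‖ₑ ^ 2 := by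
        rw [setLIntegral_closedBall_fun_norm μ (measurable_yukawa.enorm.pow_const 2), hE]
    _ ≤ μ.toSphere univ * ENNReal.ofReal (min R 1) := by
        gcongr
        exact setLIntegral_Ioc_sq_mul_enorm_yukawa_sq_le R

theorem setLIntegral_poleShell_le (hE : finrank ℝ E = 3) (a : ℝ) {y : E} (hy : y ≠ 0) :
    ∫⁻ x in poleShell y, ‖‖x‖ ^ a * nonradialPart μ (yukawaKernel y) x‖ₑ ^ 2 ∂μ ≤
      μ.toSphere univ * ENNReal.ofReal ((2 ^ |a| * ‖y‖ ^ a) ^ 2 * min (3 * ‖y‖) 1) := by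
  calc ∫⁻ x in poleShell y, ‖‖x‖ ^ a * nonradialPart μ (yukawaKernel y) x‖ₑ ^ 2 ∂μ
      ≤ ∫⁻ x in poleShell y, ENNReal.ofReal ((2 ^ |a| * ‖y‖ ^ a) ^ 2) *
          ‖nonradialPart μ (yukawaKernel y) x‖ₑ ^ 2 ∂μ := by
        refine setLIntegral_mono' (measurableSet_poleShell y) fun x hx => ?_
        rw [enorm_mul, mul_pow, ← enorm_pow, Real.enorm_of_nonneg (by positivity)]
        gcongr
        exact rpow_le_two_rpow_abs_mul_rpow a (norm_pos_iff.2 hy) hx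
    _ = ENNReal.ofReal ((2 ^ |a| * ‖y‖ ^ a) ^ 2) *
          ∫⁻ x in poleShell y, ‖nonradialPart μ (yukawaKernel y) x‖ₑ ^ 2 ∂μ :=
        lintegral_const_mul' _ _ ENNReal.ofReal_ne_top
    _ ≤ ENNReal.ofReal ((2 ^ |a| * ‖y‖ ^ a) ^ 2) *
          ∫⁻ x in closedBall y (3 * ‖y‖), ‖yukawaKernel y x‖ₑ ^ 2 ∂μ := by
        gcongr ENNReal.ofReal _ * ?_
        exact (setLIntegral_preimage_norm_enorm_nonradialPart_sq_le μ
          (measurable_yukawaKernel y) measurableSet_Icc).trans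
          (lintegral_mono_set (poleShell_subset_closedBall y))
    _ ≤ ENNReal.ofReal ((2 ^ |a| * ‖y‖ ^ a) ^ 2) *
          (μ.toSphere univ * ENNReal.ofReal (min (3 * ‖y‖) 1)) := by
        gcongr
        exact setLIntegral_closedBall_enorm_yukawaKernel_sq_le μ hE y _
    _ = μ.toSphere univ * ENNReal.ofReal ((2 ^ |a| * ‖y‖ ^ a) ^ 2 * min (3 * ‖y‖) 1) := by
        rw [ENNReal.ofReal_mul (by positivity), mul_left_comm]

theorem exists_setLIntegral_poleShell_le (hE : finrank ℝ E = 3) (a : ℝ) :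
    ∃ C : ℝ≥0, ∀ y : E, y ≠ 0 →
      ∫⁻ x in poleShell y, ‖‖x‖ ^ a * nonradialPart μ (yukawaKernel y) x‖ₑ ^ 2 ∂μ ≤
        C * ENNReal.ofReal (‖y‖ ^ (2 * a + 1) * min 1 ‖y‖⁻¹) := by
  refine ⟨(μ.toSphere univ).toNNReal * (3 * (2 ^ |a|) ^ 2 : ℝ).toNNReal, fun y hy => ?_⟩
  have hy0 : 0 < ‖y‖ := norm_pos_iff.2 hy
  have hscale : (2 ^ |a| * ‖y‖ ^ a) ^ 2 * min (3 * ‖y‖) 1 ≤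
      3 * (2 ^ |a|) ^ 2 * (‖y‖ ^ (2 * a + 1) * min 1 ‖y‖⁻¹) := by
    rw [Real.rpow_add_one hy0.ne', mul_comm 2 a, Real.rpow_mul hy0.le, Real.rpow_two]
    calc _ ≤ (2 ^ |a| * ‖y‖ ^ a) ^ 2 * (3 * (‖y‖ * min 1 ‖y‖⁻¹)) := by
          gcongr
          exact min_three_mul_one_le hy0
      _ = _ := by ring
  calc ∫⁻ x in poleShell y, ‖‖x‖ ^ a * nonradialPart μ (yukawaKernel y) x‖ₑ ^ 2 ∂μ
      ≤ μ.toSphere univ * ENNReal.ofReal ((2 ^ |a| * ‖y‖ ^ a) ^ 2 * min (3 * ‖y‖) 1) :=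
        setLIntegral_poleShell_le μ hE a hy
    _ ≤ μ.toSphere univ *
          ENNReal.ofReal (3 * (2 ^ |a|) ^ 2 * (‖y‖ ^ (2 * a + 1) * min 1 ‖y‖⁻¹)) := by
        gcongr
    _ = _ := by
        rw [ENNReal.coe_mul, ENNReal.coe_toNNReal (measure_ne_top _ _),
          ENNReal.ofReal_mul (p := 3 * (2 ^ |a|) ^ 2) (by positivity), ← mul_assoc]
        rfl

theorem exists_lintegral_nonradialPart_yukawaKernel_le (hE : finrank ℝ E = 3) {q : ℝ}
    (hq : |q| < 3 / 2) :
    ∃ C : ℝ≥0, ∀ y : E, y ≠ 0 →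
      ∫⁻ x, ‖‖x‖ ^ (-1 + q) * nonradialPart μ (yukawaKernel y) x‖ₑ ^ 2 ∂μ ≤
        C * ENNReal.ofReal (‖y‖ ^ (2 * q - 1) * min 1 ‖y‖⁻¹) := by
  obtain ⟨hq₁, hq₂⟩ := abs_lt.1 hq
  have hdim : (finrank ℝ E : ℝ) = 3 := by rw [hE]; norm_num
  obtain ⟨C₁, hC₁⟩ := exists_setLIntegral_poleShell_le μ hE (-1 + q)
  obtain ⟨C₂, hC₂⟩ := exists_setLIntegral_compl_poleShell_le μ (a := -1 + q)
    (by rw [hdim]; linarith) (by rw [hdim]; linarith)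
  refine ⟨C₁ + C₂, fun y hy => ?_⟩
  specialize hC₁ y hy
  specialize hC₂ y hy
  rw [show 2 * (-1 + q) + 1 = 2 * q - 1 by ring] at hC₁
  rw [hdim, show 2 * (-1 + q) - 2 + 3 = 2 * q - 1 by ring] at hC₂
  rw [← lintegral_add_compl _ (measurableSet_poleShell y), ENNReal.coe_add, add_mul]
  exact add_le_add hC₁ hC₂

theorem exists_sqrt_integral_nonradialPart_yukawaKernel_le (hE : finrank ℝ E = 3) {q : ℝ}
    (hq : |q| < 3 / 2) :
    ∃ C : ℝ≥0, ∀ y : E, y ≠ 0 →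
      Integrable (fun x => (‖x‖ ^ (-1 + q)) ^ 2 * nonradialPart μ (yukawaKernel y) x ^ 2) μ ∧
      √(∫ x, (‖x‖ ^ (-1 + q)) ^ 2 * nonradialPart μ (yukawaKernel y) x ^ 2 ∂μ) ≤
        C * ‖y‖ ^ q * min (‖y‖ ^ (-(1 : ℝ) / 2)) (‖y‖ ^ (-(1 : ℝ))) := by
  obtain ⟨C, hC⟩ := exists_lintegral_nonradialPart_yukawaKernel_le μ hE hq
  refine ⟨NNReal.sqrt C, fun y hy => ?_⟩
  specialize hC y hy
  have hweight : Measurable fun x : E => ‖x‖ ^ (-1 + q) := by fun_prop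
  have hmeas := hweight.mul (measurable_nonradialPart μ (measurable_yukawaKernel y))
  simp only [← mul_pow]
  refine ⟨integrable_sq_of_lintegral_ne_top hmeas.aestronglyMeasurable
    (hC.trans_lt (ENNReal.mul_lt_top ENNReal.coe_lt_top ENNReal.ofReal_lt_top)).ne,
    sqrt_integral_sq_le (by positivity) (hC.trans_eq ?_)⟩
  rw [mul_assoc, mul_pow, sq_rpow_mul_min_rpow q (norm_pos_iff.2 hy), ← NNReal.coe_pow,
    NNReal.sq_sqrt, ENNReal.ofReal_mul C.coe_nonneg, ENNReal.ofReal_coe_nnreal]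

end YukawaKernel

theorem angularYukawa_weighted_L2_bound_general {E : Type*} [NormedAddCommGroup E]
    [NormedSpace ℝ E] [FiniteDimensional ℝ E] [MeasurableSpace E] [BorelSpace E] (μ : Measure E)
    [μ.IsAddHaarMeasure] (hE : finrank ℝ E = 3) (p : ℝ) (hp : |p| < 3 / 2) :
    ∃ C : ℝ, 0 < C ∧ ∀ y : E, y ≠ 0 → ∀ ε : ℝ, ε = 1 ∨ ε = -1 →
      Integrable (fun x => (‖x‖ ^ (-1 + ε * p)) ^ 2 * nonradialPart μ (yukawaKernel y) x ^ 2) μ ∧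
      √(∫ x, (‖x‖ ^ (-1 + ε * p)) ^ 2 * nonradialPart μ (yukawaKernel y) x ^ 2 ∂μ) ≤
        C * ‖y‖ ^ (ε * p) * min (‖y‖ ^ (-(1 : ℝ) / 2)) (‖y‖ ^ (-(1 : ℝ))) := by
  have : Nontrivial E := nontrivial_of_finrank_pos (R := ℝ) (by omega)
  obtain ⟨C₁, hC₁⟩ := exists_sqrt_integral_nonradialPart_yukawaKernel_le μ hE hp
  obtain ⟨C₂, hC₂⟩ :=
    exists_sqrt_integral_nonradialPart_yukawaKernel_le μ hE (q := -p) (by rwa [abs_neg])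
  refine ⟨C₁ + C₂ + 1, by positivity, fun y hy ε hε => ?_⟩
  rcases hε with rfl | rfl
  · rw [one_mul]
    refine (hC₁ y hy).imp_right fun hle => hle.trans ?_
    gcongr
    linarith [C₂.coe_nonneg]
  · rw [neg_one_mul]
    refine (hC₂ y hy).imp_right fun hle => hle.trans ?_
    gcongr
    linarith [C₁.coe_nonneg]

/-- Weighted `L²` bound on the angular Yukawa kernel: for `|p| < 3/2` there is a constant
`C_p` such that for every `y ≠ 0` and either choice of sign `ε = ±1`,
`‖ |x|^{-1+εp} K(x) ‖_{L²_x} ≤ C_p |y|^{εp} min(|y|^{-1/2}, |y|^{-1})`. -/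
theorem angularYukawa_weighted_L2_bound (p : ℝ) (hp : |p| < 3 / 2) :
    ∃ C : ℝ, 0 < C ∧ ∀ y : EuclideanSpace ℝ (Fin 3), y ≠ 0 → ∀ ε : ℝ, ε = 1 ∨ ε = -1 →
      Real.sqrt (∫ x : EuclideanSpace ℝ (Fin 3),
          (‖x‖ ^ (-1 + ε * p)) ^ 2 * (angularYukawa x y) ^ 2) ≤
        C * ‖y‖ ^ (ε * p) * min (‖y‖ ^ (-(1 : ℝ) / 2)) (‖y‖ ^ (-(1 : ℝ))) := by
  obtain ⟨C, hC, hbound⟩ :=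
    angularYukawa_weighted_L2_bound_general volume finrank_euclideanSpace_fin p hp
  exact ⟨C, hC, fun y hy ε hε => (hbound y hy ε hε).2⟩
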